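/- Elementary complementation for the graph semantics: for any unit graph chain of the form G₀ ⋗ G₁ ⋗ ⋯ ⋗ G_k (k ∈ ℕ, with G_k a literal) and any valuation frame M of the second ('graph') semantics: if [M ⊨ G₀ ⋗ G₁ ⋗ ⋯ ⋗ G_k] = 1 then [M ⊨ recursiveReduce2(G₀ ⋗ G₁ ⋗ ⋯ ⋗ G_k)] = 0, and if [M ⊨ recursiveReduce2(G₀ ⋗ G₁ ⋗ ⋯ ⋗ G_k)] = 1 then [M ⊨ G₀ ⋗ G₁ ⋗ ⋯ ⋗ G_k] = 0; these two events are mutually exclusive. -/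

import Mathlib

/-!
The value of a chain depends on the value of its tail in the context extended by its head, so the
claim is proved in every context at once.  `GFrame.valAt M ts F` evaluates the ∧/∨-structure of `F`
with all its leaves read in the context `ts`.

Two facts carry the proof.  Distributing `H ⋗ -` over a formula `X` amounts to
`valAt ts (dist2 H X) = min (J (ts.H)) (valAt (ts.⟨H⟩) X)` (`valAt_dist2`), by distributivity of `min`
over `max` and the clause for `J` on sequence terms.  Consequently, by induction on `F`,
`valAt ts (rr2 F) = 1 - J (ts.F)` (`valAt_rr2`): for a chain `H ⋗ T` this is the Boolean identity
`¬h ∨ (h ∧ ¬t) = ¬(h ∧ t)`.  At the empty context `valAt` agrees with `val` on the formulas in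
question, so `[M ⊨ rr2 G] = 1 - [M ⊨ G]`.
-/

namespace GraphGradual

/-- Formulas of the second ('graph') gradual logic: F ::= a | F ∧ F | F ∨ F | ¬F | F ⋗ F. -/
inductive GGF (A : Type) : Type
  | lit : A → GGF A
  | conj : GGF A → GGF A → GGF A
  | disj : GGF A → GGF A → GGF A
  | neg  : GGF A → GGF A
  | obat : GGF A → GGF A → GGF A

/-- Unit chains of literals a₀ ⋗ a₁ ⋗ ⋯ ⋗ a_k (right-associated). -/
inductive LitChain {A : Type} : GGF A → Prop
  | base (a b : A) : LitChain (GGF.obat (GGF.lit a) (GGF.lit b))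
  | cons (a : A) {F : GGF A} : LitChain F → LitChain (GGF.obat (GGF.lit a) F)

mutual
  /-- Unit graph chains. -/
  inductive UGC {A : Type} : GGF A → Prop
    | ofLitChain {F : GGF A} : LitChain F → UGC F
    | snoc {G : GGF A} (a : A) : UGC G → UGC (GGF.obat G (GGF.lit a))
    | conj {G₁ G₂ : GGF A} (a : A) :
        LitOrUGC G₁ → LitOrUGC G₂ → UGC (GGF.obat (GGF.conj G₁ G₂) (GGF.lit a))
  /-- Formulas that are a literal or a unit graph chain. -/
  inductive LitOrUGC {A : Type} : GGF A → Prop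
    | lit (a : A) : LitOrUGC (GGF.lit a)
    | chain {F : GGF A} : UGC F → LitOrUGC F
end

/-- Unit graph expansion: built from literals and unit graph chains using only ∧ and ∨. -/
inductive UGE {A : Type} : GGF A → Prop
  | lit (a : A) : UGE (GGF.lit a)
  | chain {F : GGF A} : UGC F → UGE F
  | conj {F G : GGF A} : UGE F → UGE G → UGE (GGF.conj F G)
  | disj {F G : GGF A} : UGE F → UGE G → UGE (GGF.disj F G)

/-- `AndOf l F`: F is some ∧-association of the (nonempty) list l of formulas. -/
inductive AndOf {A : Type} : List (GGF A) → GGF A → Prop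
  | single (F : GGF A) : AndOf [F] F
  | node {l₁ l₂ : List (GGF A)} {F₁ F₂ : GGF A} :
      AndOf l₁ F₁ → AndOf l₂ F₂ → AndOf (l₁ ++ l₂) (GGF.conj F₁ F₂)

/-- `OrOf l F`: F is some ∨-association of the (nonempty) list l of formulas. -/
inductive OrOf {A : Type} : List (GGF A) → GGF A → Prop
  | single (F : GGF A) : OrOf [F] F
  | node {l₁ l₂ : List (GGF A)} {F₁ F₂ : GGF A} :
      OrOf l₁ F₁ → OrOf l₂ F₂ → OrOf (l₁ ++ l₂) (GGF.disj F₁ F₂)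

/-- Right-nested conjunction F ∧ (G₀ ∧ (G₁ ∧ ⋯)). -/
def bigAnd {A : Type} : GGF A → List (GGF A) → GGF A
  | F, [] => F
  | F, G :: l => GGF.conj F (bigAnd G l)

/-- Right-nested disjunction F ∨ (G₀ ∨ (G₁ ∨ ⋯)). -/
def bigOr {A : Type} : GGF A → List (GGF A) → GGF A
  | F, [] => F
  | F, G :: l => GGF.disj F (bigOr G l)

/-- `(⋀ m) ⋗ F` for a nonempty list m (default F on the empty list, never used). -/
def mkConj {A : Type} (F : GGF A) : List (GGF A) → GGF A
  | [] => F
  | G :: l => GGF.obat (bigAnd G l) F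

/-- Disjunction of a nonempty list (default d on the empty list, never used). -/
def bigOrList {A : Type} (d : GGF A) : List (GGF A) → GGF A
  | [] => d
  | G :: l => bigOr G l

/-- One-step reduction of the graph gradual logic. -/
inductive GStep {A : Type} (c : A → A) : GGF A → GGF A → Prop
  | neg1 (a : A) : GStep c (GGF.neg (GGF.lit a)) (GGF.lit (c a))
  | neg2 (F₁ F₂ : GGF A) :
      GStep c (GGF.neg (GGF.conj F₁ F₂)) (GGF.disj (GGF.neg F₁) (GGF.neg F₂))
  | neg3 (F₁ F₂ : GGF A) :
      GStep c (GGF.neg (GGF.disj F₁ F₂)) (GGF.conj (GGF.neg F₁) (GGF.neg F₂))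
  | neg4 {G : GGF A} {l : List (GGF A)} {H : GGF A} (F₂ : GGF A)
      (hl : ∀ X ∈ (G :: l), LitOrUGC X) (hH : AndOf (G :: l) H) :
      GStep c (GGF.neg (GGF.obat H F₂))
        (bigOr (GGF.neg G) (l.map GGF.neg ++ [GGF.obat H (GGF.neg F₂)]))
  | ob3 {l : List (GGF A)} {L : GGF A} (F : GGF A)
      (hlen : 2 ≤ l.length) (hl : ∀ X ∈ l, LitOrUGC X) (hL : OrOf l L) :
      GStep c (GGF.obat L F)
        (bigOrList F ((l.sublists.filter (fun m => !m.isEmpty)).map (mkConj F)))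
  | ob4 (F₁ F₂ F₃ : GGF A) :
      GStep c (GGF.obat F₁ (GGF.conj F₂ F₃)) (GGF.conj (GGF.obat F₁ F₂) (GGF.obat F₁ F₃))
  | ob5 (F₁ F₂ F₃ : GGF A) :
      GStep c (GGF.obat F₁ (GGF.disj F₂ F₃)) (GGF.disj (GGF.obat F₁ F₂) (GGF.obat F₁ F₃))
  | objD1 (F₁ F₂ F₃ F₄ : GGF A) :
      GStep c (GGF.obat (GGF.conj F₁ (GGF.disj F₂ F₃)) F₄)
        (GGF.obat (GGF.disj (GGF.conj F₁ F₂) (GGF.conj F₁ F₃)) F₄)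
  | objD2 (F₁ F₂ F₃ F₄ : GGF A) :
      GStep c (GGF.obat (GGF.conj (GGF.disj F₁ F₂) F₃) F₄)
        (GGF.obat (GGF.disj (GGF.conj F₁ F₃) (GGF.conj F₂ F₃)) F₄)
  | conj_left {F F' : GGF A} (G : GGF A) :
      GStep c F F' → GStep c (GGF.conj F G) (GGF.conj F' G)
  | conj_right (F : GGF A) {G G' : GGF A} :
      GStep c G G' → GStep c (GGF.conj F G) (GGF.conj F G')
  | disj_left {F F' : GGF A} (G : GGF A) :
      GStep c F F' → GStep c (GGF.disj F G) (GGF.disj F' G)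
  | disj_right (F : GGF A) {G G' : GGF A} :
      GStep c G G' → GStep c (GGF.disj F G) (GGF.disj F G')
  | neg_congr {F F' : GGF A} :
      GStep c F F' → GStep c (GGF.neg F) (GGF.neg F')
  | obat_left {F F' : GGF A} (G : GGF A) :
      GStep c F F' → GStep c (GGF.obat F G) (GGF.obat F' G)
  | obat_right (F : GGF A) {G G' : GGF A} :
      GStep c G G' → GStep c (GGF.obat F G) (GGF.obat F G')

/-- `GReduces c F G`: F ↦* G in finitely many (possibly zero) steps. -/
def GReduces {A : Type} (c : A → A) : GGF A → GGF A → Prop :=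
  Relation.ReflTransGen (GStep c)

/-- Distribute `H ⋗ -` over the ∧/∨-structure of a formula (⋗-reductions 4 and 5). -/
def dist2 {A : Type} (H : GGF A) : GGF A → GGF A
  | GGF.conj F G => GGF.conj (dist2 H F) (dist2 H G)
  | GGF.disj F G => GGF.disj (dist2 H F) (dist2 H G)
  | F => GGF.obat H F

/-- recursiveReduce2 on formulas in unit graph expansion: swap ∧/∨ outside chains,
complement the non-chain literals, replace each maximal chain with head H and tail T
by recursiveReduce2 H ∨ (H ⋗ recursiveReduce2 T), reduced into unit graph expansion
via ⋗-reductions 4 and 5. -/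
def rr2 {A : Type} (c : A → A) : GGF A → GGF A
  | GGF.lit a => GGF.lit (c a)
  | GGF.conj F G => GGF.disj (rr2 c F) (rr2 c G)
  | GGF.disj F G => GGF.conj (rr2 c F) (rr2 c G)
  | GGF.obat H T => GGF.disj (rr2 c H) (dist2 H (rr2 c T))
  | GGF.neg F => GGF.neg F

/-- Terms 𝒯 of the graph semantics: {a}, ⟨a⟩, {t}, ⟨t⟩, {t₁,t₂}, ⟨t₁⟩.⟨t₂⟩. -/
inductive GT (A : Type) : Type
  | atom : A → GT A
  | brace : GT A → GT A
  | pair : GT A → GT A → GT A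
  | ang : GT A → GT A
  | seq : GT A → GT A → GT A

/-- The congruence ≐ on terms: braces unordered and idempotent, {{t}} ≐ {t},
⟨⟨t⟩⟩ ≐ ⟨t⟩, closed under all term constructors. -/
inductive GT.Eqv {A : Type} : GT A → GT A → Prop
  | refl (t : GT A) : GT.Eqv t t
  | symm {t u : GT A} : GT.Eqv t u → GT.Eqv u t
  | trans {t u v : GT A} : GT.Eqv t u → GT.Eqv u v → GT.Eqv t v
  | brace_brace (t : GT A) : GT.Eqv (GT.brace (GT.brace t)) (GT.brace t)
  | ang_ang (t : GT A) : GT.Eqv (GT.ang (GT.ang t)) (GT.ang t)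
  | pair_comm (t u : GT A) : GT.Eqv (GT.pair t u) (GT.pair u t)
  | pair_idem (t : GT A) : GT.Eqv (GT.pair t t) (GT.brace t)
  | brace_congr {t u : GT A} : GT.Eqv t u → GT.Eqv (GT.brace t) (GT.brace u)
  | ang_congr {t u : GT A} : GT.Eqv t u → GT.Eqv (GT.ang t) (GT.ang u)
  | pair_congr {t t' u u' : GT A} :
      GT.Eqv t t' → GT.Eqv u u' → GT.Eqv (GT.pair t u) (GT.pair t' u')
  | seq_congr {t t' u u' : GT A} :
      GT.Eqv t t' → GT.Eqv u u' → GT.Eqv (GT.seq t u) (GT.seq t' u')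

/-- map: map(a) = ⟨a⟩ (in compressed form, the bare atom), map(G₀ ∧ G₁) = {map G₀, map G₁},
map(G₀ ⋗ G₁) = ⟨map G₀⟩.⟨map G₁⟩.  (Junk on ∨ and ¬, never used.) -/
def gmap {A : Type} : GGF A → GT A
  | GGF.lit a => GT.atom a
  | GGF.conj F G => GT.pair (gmap F) (gmap G)
  | GGF.obat F G => GT.seq (gmap F) (gmap G)
  | GGF.disj F G => GT.pair (gmap F) (gmap G)
  | GGF.neg F => GT.brace (gmap F)

/-- A valuation frame of the graph semantics: a local interpretation I on contexts
from 𝒯* and a global interpretation J on nonempty sequences over 𝒯, subject to the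
conditions of Definition 15 (J of a sequence term is the conjunction of the global
values of its prefixes, braces split conjunctively, J(t*.a) = I(t*,a), and J is
invariant under the congruence ≐). -/
structure GFrame (A : Type) (c : A → A) where
  I : List (GT A) → A → ℕ
  I01 : ∀ ts a, I ts a = 0 ∨ I ts a = 1
  Icompl : ∀ ts a, I ts (c a) = 1 - I ts a
  J : List (GT A) → ℕ
  J01 : ∀ l, J l = 0 ∨ J l = 1
  Jatom : ∀ ts a, J (ts ++ [GT.atom a]) = I ts a
  Jbrace : ∀ ts t, J (ts ++ [GT.brace t]) = J (ts ++ [t])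
  Jpair : ∀ ts t u, J (ts ++ [GT.pair t u]) = min (J (ts ++ [t])) (J (ts ++ [u]))
  Jseq : ∀ ts t u, J (ts ++ [GT.seq t u]) = min (J (ts ++ [t])) (J (ts ++ [GT.ang t, u]))
  Jcong : ∀ (l l' : List (GT A)), List.Forall₂ GT.Eqv l l' → J l = J l'

/-- `[M ⊨ F]` for F in unit graph expansion: a literal or unit graph chain G gets
J(compress(map G)); ∧ is min and ∨ is max. -/
def GFrame.val {A : Type} {c : A → A} (M : GFrame A c) : GGF A → ℕ
  | GGF.lit a => M.I [] a
  | GGF.conj F G => min (M.val F) (M.val G)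
  | GGF.disj F G => max (M.val F) (M.val G)
  | GGF.neg _ => 0
  | GGF.obat F G => M.J [gmap (GGF.obat F G)]

/-- The shape pairs of the bisimulation theorem for the graph logic. -/
inductive ShapePair2 {A : Type} (c : A → A) : GGF A → GGF A → Prop
  | sp1 {l : List (GGF A)} {L : GGF A} (Fc : GGF A)
      (hlen : 2 ≤ l.length) (hl : ∀ X ∈ l, LitOrUGC X) (hL : OrOf l L) :
      ShapePair2 c (GGF.obat L Fc)
        (bigOrList Fc ((l.sublists.filter (fun m => !m.isEmpty)).map (mkConj Fc)))
  | sp2 (Fa Fb Fc : GGF A) :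
      ShapePair2 c (GGF.obat Fa (GGF.conj Fb Fc)) (GGF.conj (GGF.obat Fa Fb) (GGF.obat Fa Fc))
  | sp3 (Fa Fb Fc : GGF A) :
      ShapePair2 c (GGF.obat Fa (GGF.disj Fb Fc)) (GGF.disj (GGF.obat Fa Fb) (GGF.obat Fa Fc))
  | sp4 (Fa Fb Fc Fd : GGF A) :
      ShapePair2 c (GGF.obat (GGF.conj Fa (GGF.disj Fb Fc)) Fd)
        (GGF.obat (GGF.disj (GGF.conj Fa Fb) (GGF.conj Fa Fc)) Fd)
  | sp5 (Fa Fb Fc Fd : GGF A) :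
      ShapePair2 c (GGF.obat (GGF.conj (GGF.disj Fa Fb) Fc) Fd)
        (GGF.obat (GGF.disj (GGF.conj Fa Fc) (GGF.conj Fb Fc)) Fd)
  | sp6 {G : GGF A} (hG : LitOrUGC G) :
      ShapePair2 c (GGF.neg G) (rr2 c G)
  | sp7 (Fa Fb : GGF A) :
      ShapePair2 c (GGF.neg (GGF.conj Fa Fb)) (GGF.disj (GGF.neg Fa) (GGF.neg Fb))
  | sp8 (Fa Fb : GGF A) :
      ShapePair2 c (GGF.neg (GGF.disj Fa Fb)) (GGF.conj (GGF.neg Fa) (GGF.neg Fb))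
  | sp9 {G : GGF A} {l : List (GGF A)} {H : GGF A} (Fa : GGF A)
      (hl : ∀ X ∈ (G :: l), LitOrUGC X) (hH : AndOf (G :: l) H) :
      ShapePair2 c (GGF.neg (GGF.obat H Fa))
        (bigOr (GGF.neg G) (l.map GGF.neg ++ [GGF.obat H (GGF.neg Fa)]))
  | sp10 (Fa : GGF A) : ShapePair2 c (GGF.disj Fa Fa) Fa
  | sp11 (Fa : GGF A) : ShapePair2 c (GGF.conj Fa Fa) Fa
  | sp12 (Fa Fb : GGF A) : ShapePair2 c (GGF.disj Fa Fb) (GGF.disj Fb Fa)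
  | sp13 (Fa Fb Fc : GGF A) :
      ShapePair2 c (GGF.disj Fa (GGF.disj Fb Fc)) (GGF.disj (GGF.disj Fa Fb) Fc)
  | sp14 (Fa Fb : GGF A) : ShapePair2 c (GGF.conj Fa Fb) (GGF.conj Fb Fa)
  | sp15 (Fa Fb Fc : GGF A) :
      ShapePair2 c (GGF.conj Fa (GGF.conj Fb Fc)) (GGF.conj (GGF.conj Fa Fb) Fc)

/-- `ReplaceAt2 R F F'`: F' is obtained from F by replacing one occurrence of a
subformula related by R (in either direction). -/
inductive ReplaceAt2 {A : Type} (R : GGF A → GGF A → Prop) : GGF A → GGF A → Prop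
  | here {F F' : GGF A} : R F F' → ReplaceAt2 R F F'
  | here_rev {F F' : GGF A} : R F' F → ReplaceAt2 R F F'
  | conj_left {F F' : GGF A} (G : GGF A) :
      ReplaceAt2 R F F' → ReplaceAt2 R (GGF.conj F G) (GGF.conj F' G)
  | conj_right (F : GGF A) {G G' : GGF A} :
      ReplaceAt2 R G G' → ReplaceAt2 R (GGF.conj F G) (GGF.conj F G')
  | disj_left {F F' : GGF A} (G : GGF A) :
      ReplaceAt2 R F F' → ReplaceAt2 R (GGF.disj F G) (GGF.disj F' G)
  | disj_right (F : GGF A) {G G' : GGF A} :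
      ReplaceAt2 R G G' → ReplaceAt2 R (GGF.disj F G) (GGF.disj F G')
  | neg_congr {F F' : GGF A} :
      ReplaceAt2 R F F' → ReplaceAt2 R (GGF.neg F) (GGF.neg F')
  | obat_left {F F' : GGF A} (G : GGF A) :
      ReplaceAt2 R F F' → ReplaceAt2 R (GGF.obat F G) (GGF.obat F' G)
  | obat_right (F : GGF A) {G G' : GGF A} :
      ReplaceAt2 R G G' → ReplaceAt2 R (GGF.obat F G) (GGF.obat F G')

/-- Formulas built from literals with ∧ and ⋗ only. -/
inductive ConjObat {A : Type} : GGF A → Prop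
  | lit (a : A) : ConjObat (GGF.lit a)
  | conj {F G : GGF A} : ConjObat F → ConjObat G → ConjObat (GGF.conj F G)
  | obat {F G : GGF A} : ConjObat F → ConjObat G → ConjObat (GGF.obat F G)

theorem LitChain.conjObat {A : Type} {F : GGF A} (h : LitChain F) : ConjObat F := by
  induction h with
  | base a b => exact .obat (.lit a) (.lit b)
  | cons a _ ih => exact .obat (.lit a) ih

mutual
theorem UGC.conjObat {A : Type} {F : GGF A} : UGC F → ConjObat F
  | .ofLitChain h => h.conjObat
  | .snoc a h => .obat h.conjObat (.lit a)
  | .conj a h₁ h₂ => .obat (.conj h₁.conjObat h₂.conjObat) (.lit a)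
theorem LitOrUGC.conjObat {A : Type} {F : GGF A} : LitOrUGC F → ConjObat F
  | .lit a => .lit a
  | .chain h => h.conjObat
end

/-- Value of `F` in the context `ts`: ∧ is min, ∨ is max, and any other formula `X` has the value
`J (ts.map X)`.  Treating ¬ as such a leaf, unlike `GFrame.val`, makes `valAt_dist2` hold without
any restriction on the formula. -/
def GFrame.valAt {A : Type} {c : A → A} (M : GFrame A c) (ts : List (GT A)) : GGF A → ℕ
  | GGF.conj F G => min (M.valAt ts F) (M.valAt ts G)
  | GGF.disj F G => max (M.valAt ts F) (M.valAt ts G)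
  | F => M.J (ts ++ [gmap F])

theorem valAt_dist2 {A : Type} {c : A → A} (M : GFrame A c) (ts : List (GT A)) (H X : GGF A) :
    M.valAt ts (dist2 H X) =
      min (M.J (ts ++ [gmap H])) (M.valAt (ts ++ [GT.ang (gmap H)]) X) := by
  induction X with
  | conj F G ihF ihG => simp only [dist2, GFrame.valAt, ihF, ihG]; omega
  | disj F G ihF ihG => simp only [dist2, GFrame.valAt, ihF, ihG]; omega
  | lit a => simp [dist2, GFrame.valAt, gmap, M.Jseq]
  | neg F => simp [dist2, GFrame.valAt, gmap, M.Jseq]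
  | obat F G =>
    rw [dist2, GFrame.valAt, GFrame.valAt, gmap, M.Jseq, List.append_assoc]
    all_goals simp

theorem valAt_rr2 {A : Type} {c : A → A} (M : GFrame A c) {F : GGF A} (hF : ConjObat F) :
    ∀ ts, M.valAt ts (rr2 c F) = 1 - M.J (ts ++ [gmap F]) := by
  induction hF with
  | lit a => intro ts; simp [rr2, GFrame.valAt, gmap, M.Jatom, M.Icompl]
  | conj _ _ ihF ihG =>
    intro ts
    simp only [rr2, GFrame.valAt, gmap, M.Jpair, ihF, ihG]
    omega
  | @obat H T _ _ ihH ihT =>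
    intro ts
    simp only [rr2, GFrame.valAt, gmap, valAt_dist2, M.Jseq, ihH, ihT, List.append_assoc,
      List.cons_append, List.nil_append]
    have h₁ := M.J01 (ts ++ [gmap H])
    have h₂ := M.J01 (ts ++ [GT.ang (gmap H), gmap T])
    omega

theorem val_dist2 {A : Type} {c : A → A} (M : GFrame A c) (H X : GGF A) :
    M.val (dist2 H X) = M.valAt [] (dist2 H X) := by
  induction X with
  | conj F G ihF ihG => simp only [dist2, GFrame.valAt, GFrame.val, ihF, ihG]
  | disj F G ihF ihG => simp only [dist2, GFrame.valAt, GFrame.val, ihF, ihG]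
  | _ => simp [dist2, GFrame.valAt, GFrame.val]

theorem val_rr2 {A : Type} {c : A → A} (M : GFrame A c) {F : GGF A} (hF : ConjObat F) :
    M.val (rr2 c F) = M.valAt [] (rr2 c F) := by
  induction hF with
  | lit a => simp only [rr2, GFrame.valAt, GFrame.val, gmap, M.Jatom]
  | conj _ _ ihF ihG => simp only [rr2, GFrame.valAt, GFrame.val, ihF, ihG]
  | obat _ _ ihH _ => simp only [rr2, GFrame.valAt, GFrame.val, ihH, val_dist2]

theorem val_eq_J {A : Type} {c : A → A} (M : GFrame A c) {F : GGF A} (hF : ConjObat F) :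
    M.val F = M.J [gmap F] := by
  induction hF with
  | lit a => exact (M.Jatom [] a).symm
  | conj _ _ ihF ihG =>
    rw [GFrame.val, ihF, ihG]
    exact (M.Jpair [] _ _).symm
  | obat _ _ _ _ => rfl

/-- Elementary complementation, graph semantics: for any unit
graph chain (or literal) G and any valuation frame M of the graph semantics:
if [M ⊨ G] = 1 then [M ⊨ recursiveReduce2 G] = 0, if [M ⊨ recursiveReduce2 G] = 1
then [M ⊨ G] = 0, and these two events are mutually exclusive. -/
theorem graph_elementary_complementation (A : Type) [Countable A] [Infinite A]
    (c : A → A) (hc : Function.Involutive c)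
    (G : GGF A) (hG : LitOrUGC G) (M : GFrame A c) :
    (M.val G = 1 → M.val (rr2 c G) = 0) ∧
    (M.val (rr2 c G) = 1 → M.val G = 0) ∧
    ¬(M.val G = 1 ∧ M.val (rr2 c G) = 1) := by
  have h := val_rr2 M hG.conjObat
  rw [valAt_rr2 M hG.conjObat, List.nil_append, ← val_eq_J M hG.conjObat] at h
  omega

end GraphGradual
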